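/- arXiv:2407.11465 — 5 statements merged into one kernel-verified Lean document; each statement's English description precedes it below -/
import Mathlib

section
/- Suppose β_t ≥ 0 pointwise for every t and that L := sup_t E[L_t] < ∞. Then the wealth process {W_t} is a (1 + L, 0)-sequential tail evidence against P: for all x > 0, P(sup_t W_t ≥ x) ≤ (1 + L)/x. -/
open MeasureTheory

/-!
Every round multiplies the wealth by a nonnegative return of conditional mean one, so only borrowing
moves its conditional mean: `E[W (t + 1) | ℱ t] = W t + β (t + 1)`. Nonnegative borrowings thus make
the wealth a nonnegative submartingale with `E[W t] = 1 + E[L t]`, to which Doob's maximal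
inequality applies on every finite horizon.
-/

section FairReturn

variable {Ω : Type*} {m mΩ : MeasurableSpace Ω} {μ : Measure Ω} {V R lam X : Ω → ℝ}

theorem integrable_of_condExp_eq_one (hR : μ[R | m] =ᵐ[μ] 1) : Integrable R μ := by
  by_contra hR_int
  rw [condExp_of_not_integrable hR_int] at hR
  have hμ : μ = 0 := by
    rw [← ae_eq_bot, ← Filter.eventually_false_iff_eq_bot]
    filter_upwards [hR] with ω hω using zero_ne_one hω
  exact hR_int (hμ ▸ integrable_zero_measure)

theorem trim_withDensity_ofReal_eq_trim (hm : m ≤ mΩ) [IsFiniteMeasure μ] (hR_nonneg : 0 ≤ R)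
    (hR : μ[R | m] =ᵐ[μ] 1) :
    (μ.withDensity fun ω => ENNReal.ofReal (R ω)).trim hm = μ.trim hm := by
  have hR_int : Integrable R μ := integrable_of_condExp_eq_one hR
  refine @Measure.ext _ m _ _ fun s hs => ?_
  have hsetIntegral : ∫ ω in s, R ω ∂μ = μ.real s := by
    rw [← setIntegral_condExp hm hR_int hs, setIntegral_congr_ae (hm s hs) (hR.mono fun _ h _ => h)]
    simp
  rw [trim_measurableSet_eq hm hs, trim_measurableSet_eq hm hs, withDensity_apply _ (hm s hs),
    ← ofReal_integral_eq_lintegral_ofReal hR_int.integrableOn (.of_forall hR_nonneg),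
    hsetIntegral, ofReal_measureReal]

theorem integrable_mul_of_condExp_eq_one (hm : m ≤ mΩ) [IsFiniteMeasure μ]
    (hV : StronglyMeasurable[m] V) (hV_int : Integrable V μ) (hR_nonneg : 0 ≤ R)
    (hR : μ[R | m] =ᵐ[μ] 1) : Integrable (V * R) μ := by
  have hR_int : Integrable R μ := integrable_of_condExp_eq_one hR
  -- The measure with density `R` agrees with `μ` on `m`, hence integrates `V` as well.
  have hV_trim : Integrable V ((μ.withDensity fun ω => ENNReal.ofReal (R ω)).trim hm) := by
    rw [trim_withDensity_ofReal_eq_trim hm hR_nonneg hR]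
    exact hV_int.trim hm hV
  have hV_density := integrable_of_integrable_trim hm hV_trim
  rw [integrable_withDensity_iff_integrable_smul₀' hR_int.aemeasurable.ennreal_ofReal
    (by simp)] at hV_density
  refine hV_density.congr (.of_forall fun ω => ?_)
  simp [ENNReal.toReal_ofReal (hR_nonneg ω), mul_comm]

theorem condExp_mul_eq_self_of_condExp_eq_one (hm : m ≤ mΩ) [IsFiniteMeasure μ]
    (hV : StronglyMeasurable[m] V) (hV_int : Integrable V μ) (hR_nonneg : 0 ≤ R)
    (hR : μ[R | m] =ᵐ[μ] 1) : μ[V * R | m] =ᵐ[μ] V := by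
  have hVR : Integrable (V * R) μ :=
    integrable_mul_of_condExp_eq_one hm hV hV_int hR_nonneg hR
  filter_upwards [condExp_mul_of_stronglyMeasurable_left hV hVR (integrable_of_condExp_eq_one hR),
    hR] with ω hpull hω
  rw [hpull, Pi.mul_apply, hω, Pi.one_apply, mul_one]

theorem condExp_one_add_mul_eq_one [IsFiniteMeasure μ] (hm : m ≤ mΩ)
    (hlam : StronglyMeasurable[m] lam) (hX_int : Integrable X μ)
    (hlamX_int : Integrable (lam * X) μ) (hX : μ[X | m] =ᵐ[μ] 0) :
    μ[1 + lam * X | m] =ᵐ[μ] 1 := by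
  have hone : μ[(1 : Ω → ℝ) | m] = 1 := condExp_const hm 1
  have hone_int : Integrable (1 : Ω → ℝ) μ := integrable_const 1
  filter_upwards [condExp_add hone_int hlamX_int m,
    condExp_mul_of_stronglyMeasurable_left hlam hlamX_int hX_int, hX] with ω hadd hpull hω
  rw [hadd, Pi.add_apply, hone, hpull, Pi.mul_apply, hω, Pi.zero_apply, mul_zero, add_zero]

end FairReturn

section MaximalInequality

variable {Ω : Type*} {mΩ : MeasurableSpace Ω} {μ : Measure Ω} {ℱ : Filtration ℕ mΩ}
  {M : ℕ → Ω → ℝ}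

theorem measure_exists_le_le_submartingale_le [IsFiniteMeasure μ] (hM : Submartingale M ℱ μ)
    (hM_nonneg : 0 ≤ M) {y : ℝ} (hy : 0 < y) (n : ℕ) :
    μ {ω | ∃ k ≤ n, y ≤ M k ω} ≤ ENNReal.ofReal ((∫ ω, M n ω ∂μ) / y) := by
  lift y to NNReal using hy.le
  have hset : {ω | ∃ k ≤ n, (y : ℝ) ≤ M k ω} = {ω | (y : ℝ) ≤
      (Finset.range (n + 1)).sup' Finset.nonempty_range_add_one fun k => M k ω} := by
    ext ω
    simp [Finset.le_sup'_iff]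
  have hdoob : y * μ {ω | ∃ k ≤ n, (y : ℝ) ≤ M k ω} ≤ ENNReal.ofReal (∫ ω, M n ω ∂μ) := by
    rw [hset]
    refine (maximal_ineq hM hM_nonneg n).trans (ENNReal.ofReal_le_ofReal ?_)
    exact setIntegral_le_integral (hM.integrable n) (.of_forall (hM_nonneg n))
  rw [ENNReal.ofReal_div_of_pos hy, ENNReal.ofReal_coe_nnreal]
  refine ENNReal.le_div_iff_mul_le (.inl ?_) (.inl ENNReal.coe_ne_top) |>.2 ?_
  · exact_mod_cast hy.ne'
  · rwa [mul_comm]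

theorem measure_exists_le_submartingale_le [IsFiniteMeasure μ] (hM : Submartingale M ℱ μ)
    (hM_nonneg : 0 ≤ M) {c : ℝ} (hc : ∀ n, ∫ ω, M n ω ∂μ ≤ c) {y : ℝ} (hy : 0 < y) :
    μ {ω | ∃ k, y ≤ M k ω} ≤ ENNReal.ofReal (c / y) := by
  have hset : {ω | ∃ k, y ≤ M k ω} = ⋃ n : ℕ, {ω | ∃ k ≤ n, y ≤ M k ω} := by
    ext ω
    simp only [Set.mem_iUnion, Set.mem_ofPred_eq]
    exact ⟨fun ⟨k, hk⟩ => ⟨k, k, le_rfl, hk⟩, fun ⟨_, k, _, hk⟩ => ⟨k, hk⟩⟩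
  have hmono : Monotone fun n : ℕ => {ω | ∃ k ≤ n, y ≤ M k ω} :=
    fun _ _ hab _ ⟨k, hk, hyk⟩ => ⟨k, hk.trans hab, hyk⟩
  rw [hset, hmono.measure_iUnion]
  refine iSup_le fun n => (measure_exists_le_le_submartingale_le hM hM_nonneg hy n).trans ?_
  gcongr
  exact hc n

theorem measure_le_iSup_le_of_forall_measure_exists_le {ι : Type*} {f : ι → Ω → ℝ}
    {g : ℝ → ENNReal} {x : ℝ} (hg : ContinuousWithinAt g (Set.Iio x) x)
    (hf : ∀ᶠ y in nhdsWithin x (Set.Iio x), μ {ω | ∃ i, y ≤ f i ω} ≤ g y) :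
    μ {ω | (x : EReal) ≤ ⨆ i, (f i ω : EReal)} ≤ g x := by
  -- The supremum may equal `x` without being attained, so the levels `y < x` are used instead.
  refine ge_of_tendsto hg ?_
  filter_upwards [hf, self_mem_nhdsWithin] with y hy hyx
  refine (measure_mono fun ω hω => ?_).trans hy
  obtain ⟨i, hi⟩ := lt_iSup_iff.1 ((EReal.coe_lt_coe_iff.2 hyx).trans_le hω)
  exact ⟨i, (EReal.coe_lt_coe_iff.1 hi).le⟩

theorem measure_le_iSup_submartingale_le [IsFiniteMeasure μ] (hM : Submartingale M ℱ μ)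
    (hM_nonneg : 0 ≤ M) {c : ℝ} (hc : ∀ n, ∫ ω, M n ω ∂μ ≤ c) {x : ℝ} (hx : 0 < x) :
    μ {ω | (x : EReal) ≤ ⨆ n, (M n ω : EReal)} ≤ ENNReal.ofReal (c / x) := by
  have hcont : ContinuousAt (fun y : ℝ => ENNReal.ofReal (c / y)) x :=
    ENNReal.continuous_ofReal.continuousAt.comp (continuousAt_const.div continuousAt_id hx.ne')
  refine measure_le_iSup_le_of_forall_measure_exists_le hcont.continuousWithinAt ?_
  filter_upwards [nhdsWithin_le_nhds (lt_mem_nhds hx)] with y hy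
  exact measure_exists_le_submartingale_le hM hM_nonneg hc hy

end MaximalInequality

/-- `W` is the wealth of a gambler who before round `t` borrows a predictable amount `β t ≥ 0` and
then plays a fair round with gross return `R t`. Rounds are numbered from `0`, so that `β t` is
`ℱ t`-measurable while `R t` and `W (t + 1)` are only known at time `t + 1`. -/
structure IsBorrowingWealth {Ω : Type*} {mΩ : MeasurableSpace Ω} (μ : Measure Ω)
    (ℱ : Filtration ℕ mΩ) (R β W : ℕ → Ω → ℝ) : Prop where
  return_stronglyMeasurable (t : ℕ) : StronglyMeasurable[ℱ (t + 1)] (R t)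
  return_nonneg (t : ℕ) : 0 ≤ R t
  return_condExp (t : ℕ) : μ[R t | ℱ t] =ᵐ[μ] 1
  borrowing_stronglyMeasurable (t : ℕ) : StronglyMeasurable[ℱ t] (β t)
  borrowing_integrable (t : ℕ) : Integrable (β t) μ
  borrowing_nonneg (t : ℕ) : 0 ≤ β t
  zero_stronglyMeasurable : StronglyMeasurable[ℱ 0] (W 0)
  zero_integrable : Integrable (W 0) μ
  zero_nonneg : 0 ≤ W 0
  succ (t : ℕ) : W (t + 1) = (W t + β t) * R t

namespace IsBorrowingWealth

variable {Ω : Type*} {mΩ : MeasurableSpace Ω} {μ : Measure Ω} {ℱ : Filtration ℕ mΩ}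
  {R β W : ℕ → Ω → ℝ}

theorem nonneg (h : IsBorrowingWealth μ ℱ R β W) : 0 ≤ W := by
  intro t
  induction t with
  | zero => exact h.zero_nonneg
  | succ t ih =>
    rw [h.succ]
    exact mul_nonneg (add_nonneg ih (h.borrowing_nonneg t)) (h.return_nonneg t)

theorem stronglyAdapted (h : IsBorrowingWealth μ ℱ R β W) : StronglyAdapted ℱ W := by
  intro t
  induction t with
  | zero => exact h.zero_stronglyMeasurable
  | succ t ih =>
    rw [h.succ]
    exact ((ih.add (h.borrowing_stronglyMeasurable t)).mono (ℱ.mono t.le_succ)).mul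
      (h.return_stronglyMeasurable t)

variable [IsFiniteMeasure μ]

theorem integrable (h : IsBorrowingWealth μ ℱ R β W) (t : ℕ) : Integrable (W t) μ := by
  induction t with
  | zero => exact h.zero_integrable
  | succ t ih =>
    rw [h.succ]
    exact integrable_mul_of_condExp_eq_one (ℱ.le t)
      ((h.stronglyAdapted t).add (h.borrowing_stronglyMeasurable t))
      (ih.add (h.borrowing_integrable t)) (h.return_nonneg t) (h.return_condExp t)

theorem condExp_succ (h : IsBorrowingWealth μ ℱ R β W) (t : ℕ) :
    μ[W (t + 1) | ℱ t] =ᵐ[μ] W t + β t := by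
  rw [h.succ]
  exact condExp_mul_eq_self_of_condExp_eq_one (ℱ.le t)
    ((h.stronglyAdapted t).add (h.borrowing_stronglyMeasurable t))
    ((h.integrable t).add (h.borrowing_integrable t)) (h.return_nonneg t) (h.return_condExp t)

theorem submartingale (h : IsBorrowingWealth μ ℱ R β W) : Submartingale W ℱ μ := by
  refine submartingale_nat h.stronglyAdapted h.integrable fun t => ?_
  filter_upwards [h.condExp_succ t] with ω hω
  rw [hω]
  exact le_add_of_nonneg_right (h.borrowing_nonneg t ω)

theorem integral_eq (h : IsBorrowingWealth μ ℱ R β W) (t : ℕ) :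
    ∫ ω, W t ω ∂μ = ∫ ω, W 0 ω ∂μ + ∫ ω, ∑ i ∈ Finset.range t, β i ω ∂μ := by
  rw [integral_finsetSum _ fun i _ => h.borrowing_integrable i]
  induction t with
  | zero => simp
  | succ t ih =>
    calc ∫ ω, W (t + 1) ω ∂μ = ∫ ω, (W t + β t) ω ∂μ := by
          rw [← integral_condExp (ℱ.le t)]
          exact integral_congr_ae (h.condExp_succ t)
      _ = ∫ ω, W t ω ∂μ + ∫ ω, β t ω ∂μ :=
          integral_add (h.integrable t) (h.borrowing_integrable t)
      _ = _ := by rw [ih, Finset.sum_range_succ, add_assoc]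

theorem of_bets {X lam : ℕ → Ω → ℝ}
    (hX_mem : ∀ t ω, X t ω ∈ Set.Icc (-1 : ℝ) 1)
    (hX_meas : ∀ t, StronglyMeasurable[ℱ (t + 1)] (X t))
    (hX_cond : ∀ t, μ[X t | ℱ t] =ᵐ[μ] 0)
    (hlam_meas : ∀ t, StronglyMeasurable[ℱ t] (lam t))
    (hlam_mem : ∀ t ω, lam t ω ∈ Set.Icc (-1 : ℝ) 1)
    (hβ_meas : ∀ t, StronglyMeasurable[ℱ t] (β t)) (hβ_int : ∀ t, Integrable (β t) μ)
    (hβ_nonneg : ∀ t, 0 ≤ β t) (hW0_meas : StronglyMeasurable[ℱ 0] (W 0))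
    (hW0_int : Integrable (W 0) μ) (hW0_nonneg : 0 ≤ W 0)
    (hW : ∀ t, W (t + 1) = (W t + β t) * (1 + lam t * X t)) :
    IsBorrowingWealth μ ℱ (fun t => 1 + lam t * X t) β W := by
  have habs (t : ℕ) (ω : Ω) : |lam t ω * X t ω| ≤ 1 := by
    rw [abs_mul]
    exact mul_le_one₀ (abs_le.2 (hlam_mem t ω)) (abs_nonneg _) (abs_le.2 (hX_mem t ω))
  have hlamX_meas (t : ℕ) : StronglyMeasurable[ℱ (t + 1)] (lam t * X t) :=
    ((hlam_meas t).mono (ℱ.mono t.le_succ)).mul (hX_meas t)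
  have hX_int (t : ℕ) : Integrable (X t) μ :=
    .of_bound ((hX_meas t).mono (ℱ.le _)).aestronglyMeasurable 1
      (.of_forall fun ω => abs_le.2 (hX_mem t ω))
  have hlamX_int (t : ℕ) : Integrable (lam t * X t) μ :=
    .of_bound ((hlamX_meas t).mono (ℱ.le _)).aestronglyMeasurable 1 (.of_forall (habs t))
  exact
    { return_stronglyMeasurable t := stronglyMeasurable_one.add (hlamX_meas t)
      return_nonneg t ω := neg_le_iff_add_nonneg'.1 (abs_le.1 (habs t ω)).1
      return_condExp t :=
        condExp_one_add_mul_eq_one (ℱ.le t) (hlam_meas t) (hX_int t) (hlamX_int t) (hX_cond t)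
      borrowing_stronglyMeasurable := hβ_meas
      borrowing_integrable := hβ_int
      borrowing_nonneg := hβ_nonneg
      zero_stronglyMeasurable := hW0_meas
      zero_integrable := hW0_int
      zero_nonneg := hW0_nonneg
      succ := hW }

end IsBorrowingWealth

theorem wealth_sequential_tail_evidence_of_bounded_expected_liabilities_general
    {Ω : Type*} {mΩ : MeasurableSpace Ω} {μ : Measure Ω} [IsFiniteMeasure μ]
    {ℱ : Filtration ℕ mΩ} {R β W : ℕ → Ω → ℝ} (h : IsBorrowingWealth μ ℱ R β W) {C : ℝ}
    (hC : ∀ t, ∫ ω, ∑ i ∈ Finset.range t, β i ω ∂μ ≤ C) {x : ℝ} (hx : 0 < x) :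
    μ {ω | (x : EReal) ≤ ⨆ t, (W t ω : EReal)} ≤
      ENNReal.ofReal ((∫ ω, W 0 ω ∂μ + C) / x) :=
  measure_le_iSup_submartingale_le h.submartingale h.nonneg
    (fun t => (h.integral_eq t).trans_le (add_le_add_right (hC t) _)) hx

/-- If borrowings are nonnegative and `Lconst = sup_t E[L_t] < ∞`, then the wealth process
is a `(1 + Lconst, 0)`-sequential tail evidence against `P`. -/
theorem wealth_sequential_tail_evidence_of_bounded_expected_liabilities
    {Ω : Type*} {mΩ : MeasurableSpace Ω} {μ : Measure Ω} [IsProbabilityMeasure μ]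
    (ℱ : Filtration ℕ mΩ)
    (X lam β W L N : ℕ → Ω → ℝ)
    (hX_val : ∀ t ω, X (t + 1) ω = 1 ∨ X (t + 1) ω = -1)
    (hX_meas : ∀ t, StronglyMeasurable[ℱ (t + 1)] (X (t + 1)))
    (hX_cond : ∀ t, μ[X (t + 1) | ℱ t] =ᵐ[μ] 0)
    (hlam_pred : ∀ t, StronglyMeasurable[ℱ t] (lam (t + 1)))
    (hlam_bdd : ∀ t ω, lam (t + 1) ω ∈ Set.Icc (-1 : ℝ) 1)
    (hβ_pred : ∀ t, StronglyMeasurable[ℱ t] (β (t + 1)))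
    (hβ_int : ∀ t, Integrable (β (t + 1)) μ)
    (hβ_lb : ∀ t ω, -(W t ω) ≤ β (t + 1) ω)
    (hW0 : ∀ ω, W 0 ω = 1)
    (hW : ∀ t ω, W (t + 1) ω = (W t ω + β (t + 1) ω) * (1 + lam (t + 1) ω * X (t + 1) ω))
    (hL : ∀ t ω, L t ω = ∑ i ∈ Finset.range t, β (i + 1) ω)
    (hN : ∀ t ω, N t ω = W t ω - L t ω)
    (hβ_nonneg : ∀ t ω, 0 ≤ β (t + 1) ω)
    (hbdd : BddAbove (Set.range fun t => ∫ ω, L t ω ∂μ))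
    (Lconst : ℝ) (hLconst : Lconst = ⨆ t, ∫ ω, L t ω ∂μ) :
    ∀ x : ℝ, 0 < x →
      μ {ω | (x : EReal) ≤ ⨆ t, (W t ω : EReal)} ≤ ENNReal.ofReal ((1 + Lconst) / x) := by
  intro x hx
  have hW0_eq : W 0 = fun _ => 1 := funext hW0
  have hwealth : IsBorrowingWealth μ ℱ (fun t => 1 + lam (t + 1) * X (t + 1))
      (fun t => β (t + 1)) W :=
    .of_bets (fun t ω => by rcases hX_val t ω with h | h <;> simp [h]) hX_meas hX_cond hlam_pred
      hlam_bdd hβ_pred hβ_int hβ_nonneg (hW0_eq ▸ stronglyMeasurable_const)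
      (hW0_eq ▸ integrable_const 1) (fun ω => by simp [hW0]) fun t => funext (hW t)
  have hliabilities (t : ℕ) : ∫ ω, ∑ i ∈ Finset.range t, β (i + 1) ω ∂μ ≤ Lconst := by
    simpa only [hL, hLconst] using le_ciSup hbdd t
  simpa [hW0] using wealth_sequential_tail_evidence_of_bounded_expected_liabilities_general
    hwealth hliabilities hx
end

section
/- Suppose B := sup_t E[Σ_{i=1}^t β_i^+] < ∞, where β_i^+ = max(β_i, 0) is the positive part. Then the wealth process {W_t} is a (1 + B, 0)-sequential tail evidence against P: for all x > 0, P(sup_t W_t ≥ x) ≤ (1 + B)/x. -/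
open MeasureTheory

/-! Each round's gain factor has conditional mean one, so the net wealth `W - L` is a martingale.
Stop it when `W` first reaches `y`, or at time `n` if this has not happened by then. Optional
stopping gives `E[W_τ - L_τ] = E[W_0]`, and `L_τ ≤ Σ_{i ≤ n} β_i⁺` because `τ ≤ n`, so
`E[W_τ] ≤ E[W_0] + E[Σ_{i ≤ n} β_i⁺]`. Markov's inequality for `W_τ` bounds the probability of
reaching `y` by time `n`; the bound does not depend on `n`, and `y` may increase to `x`. -/

section MaximalInequality

variable {Ω : Type*} {mΩ : MeasurableSpace Ω} {μ : Measure Ω}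

lemma integral_stoppedValue_le_of_supermartingale {ℱ : Filtration ℕ mΩ}
    [SigmaFiniteFiltration μ ℱ] {S : ℕ → Ω → ℝ} {τ : Ω → ℕ∞} {n : ℕ} (hS : Supermartingale S ℱ μ)
    (hτ : IsStoppingTime ℱ τ) (hτn : ∀ ω, τ ω ≤ n) :
    ∫ ω, stoppedValue S τ ω ∂μ ≤ ∫ ω, S 0 ω ∂μ := by
  have h := hS.neg.expected_stoppedValue_mono (isStoppingTime_const ℱ 0) hτ
    (fun _ => zero_le) hτn
  have hneg : stoppedValue (-S) τ = -stoppedValue S τ := rfl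
  rw [stoppedValue_const, hneg, Pi.neg_apply, integral_neg', integral_neg'] at h
  exact neg_le_neg_iff.mp h

lemma mul_measureReal_exists_ge_le_of_le_supermartingale_add {ℱ : Filtration ℕ mΩ}
    [IsFiniteMeasure μ] {f S : ℕ → Ω → ℝ} {C : Ω → ℝ} {n : ℕ}
    (hS : Supermartingale S ℱ μ) (hC : Integrable C μ) (hf : StronglyAdapted ℱ f)
    (hf_nonneg : ∀ t ω, 0 ≤ f t ω) (hfS : ∀ t ≤ n, ∀ ω, f t ω ≤ S t ω + C ω) {y : ℝ} (hy : 0 ≤ y) :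
    y * μ.real {ω | ∃ t ≤ n, y ≤ f t ω} ≤ ∫ ω, S 0 ω ∂μ + ∫ ω, C ω ∂μ := by
  set τ : Ω → ℕ∞ := fun ω => (hittingBtwn f (Set.Ici y) 0 n ω : ℕ)
  have hτ : IsStoppingTime ℱ τ := hf.adapted.isStoppingTime_hittingBtwn measurableSet_Ici
  have hτn : ∀ ω, τ ω ≤ n := fun ω => Nat.cast_le.mpr (hittingBtwn_le ω)
  have hSτ : Integrable (stoppedValue S τ) μ :=
    integrable_stoppedValue ℕ hτ hS.integrable hτn
  have hfSτ : ∀ ω, stoppedValue f τ ω ≤ stoppedValue S τ ω + C ω :=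
    fun ω => hfS _ (hittingBtwn_le ω) ω
  have hhit : {ω | ∃ t ≤ n, y ≤ f t ω} ⊆ {ω | y ≤ stoppedValue S τ ω + C ω} := by
    rintro ω ⟨t, htn, hyt⟩
    exact (hittingBtwn_mem_set ⟨t, ⟨zero_le, htn⟩, hyt⟩ : y ≤ stoppedValue f τ ω).trans (hfSτ ω)
  calc y * μ.real {ω | ∃ t ≤ n, y ≤ f t ω}
      ≤ y * μ.real {ω | y ≤ stoppedValue S τ ω + C ω} := by gcongr; exact measure_ne_top _ _
    _ ≤ ∫ ω, stoppedValue S τ ω + C ω ∂μ :=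
        mul_meas_ge_le_integral_of_nonneg
          (.of_forall fun ω => (hf_nonneg _ ω).trans (hfSτ ω)) (hSτ.add hC) y
    _ = ∫ ω, stoppedValue S τ ω ∂μ + ∫ ω, C ω ∂μ := integral_add hSτ hC
    _ ≤ ∫ ω, S 0 ω ∂μ + ∫ ω, C ω ∂μ := by
        grw [integral_stoppedValue_le_of_supermartingale hS hτ hτn]

lemma measure_exists_le_of_forall_finite_horizon {p : ℕ → Ω → Prop} {c : ENNReal}
    (h : ∀ n, μ {ω | ∃ t ≤ n, p t ω} ≤ c) : μ {ω | ∃ t, p t ω} ≤ c := by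
  rw [Set.ofPred_exists, measure_iUnion_eq_iSup_accumulate]
  refine iSup_le fun n => ?_
  have hn : Set.accumulate (fun t => {ω | p t ω}) n = {ω | ∃ t ≤ n, p t ω} := by
    ext ω
    simp [Set.mem_accumulate]
  exact hn ▸ h n

lemma measure_le_iSup_le_ofReal_div {ι : Type*} {f : ι → Ω → ℝ} {c x : ℝ}
    (hx : 0 < x) (h : ∀ y, 0 < y → μ {ω | ∃ t, y ≤ f t ω} ≤ ENNReal.ofReal (c / y)) :
    μ {ω | (x : EReal) ≤ ⨆ t, (f t ω : EReal)} ≤ ENNReal.ofReal (c / x) := by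
  have hlim : Filter.Tendsto (fun y : ℝ => ENNReal.ofReal (c / y)) (nhdsWithin x (Set.Iio x))
      (nhds (ENNReal.ofReal (c / x))) :=
    ENNReal.tendsto_ofReal <|
      (tendsto_const_nhds.div Filter.tendsto_id hx.ne').mono_left nhdsWithin_le_nhds
  refine ge_of_tendsto hlim ?_
  filter_upwards [Ioo_mem_nhdsLT hx] with y ⟨hy, hyx⟩
  refine (measure_mono fun ω hω => ?_).trans (h y hy)
  obtain ⟨t, ht⟩ := lt_iSup_iff.mp ((EReal.coe_lt_coe hyx).trans_le hω)
  exact ⟨t, (EReal.coe_lt_coe_iff.mp ht).le⟩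

end MaximalInequality

section CondExp

variable {Ω : Type*} {m mΩ : MeasurableSpace Ω} {μ : Measure Ω} [IsFiniteMeasure μ]

lemma integrable_mul_of_condExp_eq_one_s5 (hm : m ≤ mΩ) {f g : Ω → ℝ} (hf : StronglyMeasurable[m] f)
    (hf_int : Integrable f μ) (hg_nonneg : 0 ≤ g) (hg_int : Integrable g μ)
    (hg : μ[g | m] =ᵐ[μ] 1) : Integrable (f * g) μ := by
  -- Weighting `μ` by `g` changes it, but not its restriction to `m`.
  have htrim : (μ.withDensity fun ω => ENNReal.ofReal (g ω)).trim hm = μ.trim hm := by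
    refine @Measure.ext _ m _ _ fun s hs => ?_
    have hs_int : ∫ ω in s, g ω ∂μ = μ.real s := by
      rw [← setIntegral_condExp hm hg_int hs, integral_congr_ae (ae_restrict_of_ae hg)]
      simp
    rw [trim_measurableSet_eq hm hs, trim_measurableSet_eq hm hs, withDensity_apply _ (hm s hs),
      ← ofReal_integral_eq_lintegral_ofReal hg_int.integrableOn (.of_forall hg_nonneg), hs_int,
      ofReal_measureReal]
  have hf_enorm : Measurable[m] fun ω => ‖f ω‖ₑ := hf.enorm
  refine ⟨(hf.mono hm).aestronglyMeasurable.mul hg_int.aestronglyMeasurable, ?_⟩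
  calc ∫⁻ ω, ‖f ω * g ω‖ₑ ∂μ
      = ∫⁻ ω, ENNReal.ofReal (g ω) * ‖f ω‖ₑ ∂μ := by
        simp_rw [enorm_mul, Real.enorm_of_nonneg (hg_nonneg _), mul_comm]
    _ = ∫⁻ ω, ‖f ω‖ₑ ∂(μ.withDensity fun ω => ENNReal.ofReal (g ω)) :=
        (lintegral_withDensity_eq_lintegral_mul₀ hg_int.aemeasurable.ennreal_ofReal
          (hf_enorm.mono hm le_rfl).aemeasurable).symm
    _ = ∫⁻ ω, ‖f ω‖ₑ ∂μ := by
        rw [← lintegral_trim hm hf_enorm, htrim, lintegral_trim hm hf_enorm]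
    _ < ⊤ := hf_int.2

lemma condExp_one_add_mul_eq_one_s5 (hm : m ≤ mΩ) {f g : Ω → ℝ} (hf : StronglyMeasurable[m] f)
    (hfg : Integrable (f * g) μ) (hg_int : Integrable g μ) (hg : μ[g | m] =ᵐ[μ] 0) :
    μ[1 + f * g | m] =ᵐ[μ] 1 := by
  have hone : μ[(1 : Ω → ℝ) | m] = 1 := condExp_const hm 1
  have hone_int : Integrable (1 : Ω → ℝ) μ := integrable_const 1
  filter_upwards [condExp_add hone_int hfg m,
    condExp_mul_of_stronglyMeasurable_left hf hfg hg_int, hg] with ω hadd hpull hgω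
  rw [hadd, Pi.add_apply, hpull, Pi.mul_apply, hgω, hone]
  simp

end CondExp

section Wealth

variable {Ω : Type*} {mΩ : MeasurableSpace Ω} {μ : Measure Ω} {ℱ : Filtration ℕ mΩ}
  {W β ξ : ℕ → Ω → ℝ}

/-- Wealth minus liabilities, where the liabilities `L_t = Σ_{i=1}^t β_i` are the amounts borrowed
up to time `t`. As in the betting protocol, borrowings are indexed from time `1`. -/
def netWealth (W β : ℕ → Ω → ℝ) (t : ℕ) : Ω → ℝ :=
  W t - ∑ i ∈ Finset.range t, β (i + 1)

lemma netWealth_zero : netWealth W β 0 = W 0 := by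
  simp [netWealth]

lemma netWealth_succ_sub (hW : ∀ t, W (t + 1) = (W t + β (t + 1)) * ξ (t + 1)) (t : ℕ) :
    netWealth W β (t + 1) - netWealth W β t
      = (W t + β (t + 1)) * ξ (t + 1) - (W t + β (t + 1)) := by
  rw [netWealth, netWealth, Finset.sum_range_succ, hW]
  abel

lemma wealth_le_netWealth_add_sum_posPart {t n : ℕ} (htn : t ≤ n) (ω : Ω) :
    W t ω ≤ netWealth W β t ω + ∑ i ∈ Finset.range n, max (β (i + 1) ω) 0 := by
  have hL : ∑ i ∈ Finset.range t, β (i + 1) ω ≤ ∑ i ∈ Finset.range n, max (β (i + 1) ω) 0 :=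
    calc ∑ i ∈ Finset.range t, β (i + 1) ω
        ≤ ∑ i ∈ Finset.range t, max (β (i + 1) ω) 0 :=
          Finset.sum_le_sum fun _ _ => le_max_left _ _
      _ ≤ ∑ i ∈ Finset.range n, max (β (i + 1) ω) 0 :=
          Finset.sum_le_sum_of_subset_of_nonneg (Finset.range_mono htn)
            fun _ _ _ => le_max_right _ _
  simp only [netWealth, Pi.sub_apply, Finset.sum_apply]
  linarith

lemma wealth_nonneg (hW0 : 0 ≤ W 0) (hW : ∀ t, W (t + 1) = (W t + β (t + 1)) * ξ (t + 1))
    (hβ : ∀ t, -W t ≤ β (t + 1)) (hξ : ∀ t, 0 ≤ ξ (t + 1)) : ∀ t, 0 ≤ W t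
  | 0 => hW0
  | t + 1 => hW t ▸ mul_nonneg (neg_le_iff_add_nonneg'.mp (hβ t)) (hξ t)

lemma stronglyAdapted_wealth (hW0 : StronglyMeasurable[ℱ 0] (W 0))
    (hW : ∀ t, W (t + 1) = (W t + β (t + 1)) * ξ (t + 1))
    (hβ : ∀ t, StronglyMeasurable[ℱ t] (β (t + 1)))
    (hξ : ∀ t, StronglyMeasurable[ℱ (t + 1)] (ξ (t + 1))) : StronglyAdapted ℱ W
  | 0 => hW0
  | t + 1 => hW t ▸
      (((stronglyAdapted_wealth hW0 hW hβ hξ t).add (hβ t)).mono (ℱ.mono t.le_succ)).mul (hξ t)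

lemma integrable_wealth [IsFiniteMeasure μ] (hW_adapted : StronglyAdapted ℱ W)
    (hW0 : Integrable (W 0) μ) (hW : ∀ t, W (t + 1) = (W t + β (t + 1)) * ξ (t + 1))
    (hβ : ∀ t, StronglyMeasurable[ℱ t] (β (t + 1))) (hβ_int : ∀ t, Integrable (β (t + 1)) μ)
    (hξ_nonneg : ∀ t, 0 ≤ ξ (t + 1)) (hξ_int : ∀ t, Integrable (ξ (t + 1)) μ)
    (hξ_cond : ∀ t, μ[ξ (t + 1) | ℱ t] =ᵐ[μ] 1) : ∀ t, Integrable (W t) μ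
  | 0 => hW0
  | t + 1 => hW t ▸ integrable_mul_of_condExp_eq_one_s5 (ℱ.le t) ((hW_adapted t).add (hβ t))
      ((integrable_wealth hW_adapted hW0 hW hβ hβ_int hξ_nonneg hξ_int hξ_cond t).add (hβ_int t))
      (hξ_nonneg t) (hξ_int t) (hξ_cond t)

lemma stronglyAdapted_netWealth (hW : StronglyAdapted ℱ W)
    (hβ : ∀ t, StronglyMeasurable[ℱ t] (β (t + 1))) : StronglyAdapted ℱ (netWealth W β) :=
  fun t => (hW t).sub <| Finset.stronglyMeasurable_sum _ fun i hi =>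
    (hβ i).mono (ℱ.mono (Finset.mem_range.mp hi).le)

lemma martingale_netWealth [IsFiniteMeasure μ] (hW_adapted : StronglyAdapted ℱ W)
    (hW_int : ∀ t, Integrable (W t) μ) (hW : ∀ t, W (t + 1) = (W t + β (t + 1)) * ξ (t + 1))
    (hβ : ∀ t, StronglyMeasurable[ℱ t] (β (t + 1))) (hβ_int : ∀ t, Integrable (β (t + 1)) μ)
    (hξ_int : ∀ t, Integrable (ξ (t + 1)) μ) (hξ_cond : ∀ t, μ[ξ (t + 1) | ℱ t] =ᵐ[μ] 1) :
    Martingale (netWealth W β) ℱ μ := by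
  refine martingale_of_condExp_sub_eq_zero_nat (stronglyAdapted_netWealth hW_adapted hβ)
    (fun t => (hW_int t).sub (integrable_finsetSum' _ fun i _ => hβ_int i)) fun t => ?_
  have hstake : StronglyMeasurable[ℱ t] (W t + β (t + 1)) := (hW_adapted t).add (hβ t)
  have hstake_int : Integrable (W t + β (t + 1)) μ := (hW_int t).add (hβ_int t)
  have hgain_int : Integrable ((W t + β (t + 1)) * ξ (t + 1)) μ := hW t ▸ hW_int (t + 1)
  rw [netWealth_succ_sub hW]
  filter_upwards [condExp_sub hgain_int hstake_int (ℱ t),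
    condExp_mul_of_stronglyMeasurable_left hstake hgain_int (hξ_int t), hξ_cond t]
    with ω hsub hpull hξω
  rw [hsub, Pi.sub_apply, hpull, Pi.mul_apply, hξω,
    condExp_of_stronglyMeasurable (ℱ.le t) hstake hstake_int]
  simp

end Wealth

/-- The wealth process of `±1` bets is the case `ξ t = 1 + λ t * X t`. -/
theorem wealth_sequential_tail_evidence_of_bounded_expected_positive_borrowings_general
    {Ω : Type*} {mΩ : MeasurableSpace Ω} {μ : Measure Ω} [IsFiniteMeasure μ]
    (ℱ : Filtration ℕ mΩ) (ξ β W : ℕ → Ω → ℝ)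
    (hξ_nonneg : ∀ t, 0 ≤ ξ (t + 1))
    (hξ_meas : ∀ t, StronglyMeasurable[ℱ (t + 1)] (ξ (t + 1)))
    (hξ_int : ∀ t, Integrable (ξ (t + 1)) μ)
    (hξ_cond : ∀ t, μ[ξ (t + 1) | ℱ t] =ᵐ[μ] 1)
    (hβ_pred : ∀ t, StronglyMeasurable[ℱ t] (β (t + 1)))
    (hβ_int : ∀ t, Integrable (β (t + 1)) μ)
    (hβ_lb : ∀ t, -W t ≤ β (t + 1))
    (hW0_nonneg : 0 ≤ W 0) (hW0_meas : StronglyMeasurable[ℱ 0] (W 0))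
    (hW0_int : Integrable (W 0) μ)
    (hW : ∀ t, W (t + 1) = (W t + β (t + 1)) * ξ (t + 1))
    (B : ℝ) (hB : ∀ t, ∫ ω, ∑ i ∈ Finset.range t, max (β (i + 1) ω) 0 ∂μ ≤ B)
    (x : ℝ) (hx : 0 < x) :
    μ {ω | (x : EReal) ≤ ⨆ t, (W t ω : EReal)} ≤ ENNReal.ofReal ((∫ ω, W 0 ω ∂μ + B) / x) := by
  have hW_adapted := stronglyAdapted_wealth hW0_meas hW hβ_pred hξ_meas
  have hW_int := integrable_wealth hW_adapted hW0_int hW hβ_pred hβ_int hξ_nonneg hξ_int hξ_cond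
  have hN := martingale_netWealth hW_adapted hW_int hW hβ_pred hβ_int hξ_int hξ_cond
  have hβpos_int : ∀ n, Integrable (fun ω => ∑ i ∈ Finset.range n, max (β (i + 1) ω) 0) μ :=
    fun n => integrable_finsetSum _ fun i _ => (hβ_int i).pos_part
  refine measure_le_iSup_le_ofReal_div hx fun y hy =>
    measure_exists_le_of_forall_finite_horizon fun n => ?_
  have hmax := mul_measureReal_exists_ge_le_of_le_supermartingale_add hN.supermartingale
    (hβpos_int n) hW_adapted (wealth_nonneg hW0_nonneg hW hβ_lb hξ_nonneg)
    (fun _ htn => wealth_le_netWealth_add_sum_posPart htn) hy.le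
  rw [netWealth_zero] at hmax
  rw [← ofReal_measureReal]
  refine ENNReal.ofReal_le_ofReal ((le_div_iff₀' hy).mpr (hmax.trans ?_))
  gcongr
  exact hB n

lemma one_add_mul_nonneg_of_abs_le_one {a b : ℝ} (ha : |a| ≤ 1) (hb : |b| ≤ 1) :
    0 ≤ 1 + a * b := by
  have hab : |a * b| ≤ 1 := abs_mul a b ▸ mul_le_one₀ ha (abs_nonneg b) hb
  linarith [neg_le_of_abs_le hab]

/-- If `B = sup_t E[Σ_{i=1}^t β_i⁺] < ∞`, then the wealth process is a
`(1 + B, 0)`-sequential tail evidence against `P`. -/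
theorem wealth_sequential_tail_evidence_of_bounded_expected_positive_borrowings
    {Ω : Type*} {mΩ : MeasurableSpace Ω} {μ : Measure Ω} [IsProbabilityMeasure μ]
    (ℱ : Filtration ℕ mΩ)
    (X lam β W L N : ℕ → Ω → ℝ)
    (hX_val : ∀ t ω, X (t + 1) ω = 1 ∨ X (t + 1) ω = -1)
    (hX_meas : ∀ t, StronglyMeasurable[ℱ (t + 1)] (X (t + 1)))
    (hX_cond : ∀ t, μ[X (t + 1) | ℱ t] =ᵐ[μ] 0)
    (hlam_pred : ∀ t, StronglyMeasurable[ℱ t] (lam (t + 1)))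
    (hlam_bdd : ∀ t ω, lam (t + 1) ω ∈ Set.Icc (-1 : ℝ) 1)
    (hβ_pred : ∀ t, StronglyMeasurable[ℱ t] (β (t + 1)))
    (hβ_int : ∀ t, Integrable (β (t + 1)) μ)
    (hβ_lb : ∀ t ω, -(W t ω) ≤ β (t + 1) ω)
    (hW0 : ∀ ω, W 0 ω = 1)
    (hW : ∀ t ω, W (t + 1) ω = (W t ω + β (t + 1) ω) * (1 + lam (t + 1) ω * X (t + 1) ω))
    (hL : ∀ t ω, L t ω = ∑ i ∈ Finset.range t, β (i + 1) ω)
    (hN : ∀ t ω, N t ω = W t ω - L t ω)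
    (hbdd : BddAbove (Set.range fun t => ∫ ω, ∑ i ∈ Finset.range t, max (β (i + 1) ω) 0 ∂μ))
    (B : ℝ) (hB : B = ⨆ t, ∫ ω, ∑ i ∈ Finset.range t, max (β (i + 1) ω) 0 ∂μ) :
    ∀ x : ℝ, 0 < x →
      μ {ω | (x : EReal) ≤ ⨆ t, (W t ω : EReal)} ≤ ENNReal.ofReal ((1 + B) / x) := by
  intro x hx
  have hX_abs : ∀ t ω, |X (t + 1) ω| ≤ 1 := fun t ω => by
    rcases hX_val t ω with h | h <;> simp [h]
  have hX_int : ∀ t, Integrable (X (t + 1)) μ := fun t =>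
    .of_bound ((hX_meas t).mono (ℱ.le _)).aestronglyMeasurable 1 (.of_forall (hX_abs t))
  have hbet_int : ∀ t, Integrable (lam (t + 1) * X (t + 1)) μ := fun t =>
    (hX_int t).bdd_mul ((hlam_pred t).mono (ℱ.le t)).aestronglyMeasurable
      (.of_forall fun ω => abs_le.mpr (hlam_bdd t ω))
  have hW0_one : W 0 = 1 := funext hW0
  have hmain := wealth_sequential_tail_evidence_of_bounded_expected_positive_borrowings_general ℱ
    (1 + lam * X) β W
    (fun t ω => one_add_mul_nonneg_of_abs_le_one (abs_le.mpr (hlam_bdd t ω)) (hX_abs t ω))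
    (fun t => stronglyMeasurable_one.add (((hlam_pred t).mono (ℱ.mono t.le_succ)).mul (hX_meas t)))
    (fun t => (integrable_const 1).add (hbet_int t))
    (fun t => condExp_one_add_mul_eq_one_s5 (ℱ.le t) (hlam_pred t) (hbet_int t) (hX_int t) (hX_cond t))
    hβ_pred hβ_int hβ_lb (hW0_one ▸ zero_le_one) (hW0_one ▸ stronglyMeasurable_one)
    (hW0_one ▸ integrable_const 1) (fun t => funext (hW t)) B (fun t => hB ▸ le_ciSup hbdd t) x hx
  simpa [hW0] using hmain
end

section
/- Suppose β_t ≥ 0 pointwise for all t, and let {η_t}_{t≥1} be a predictable process with η_t ≥ 1 for all t. Then the sub-net wealth process Ñ_t = W_t − Σ_{i=1}^t η_i β_i is a supermartingale with respect to {ℱ_t} under P. -/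
open MeasureTheory

/-!
Borrowing moves wealth and debt by the same amount, and the subsequent bet is fair, so the net
wealth `W_t - ∑_{i ≤ t} β_i` is a martingale. Liabilities `ℓ_i ≥ β_i`, such as `ℓ_i = η_i β_i`,
differ from the borrowings by `∑_{i ≤ t} (ℓ_i - β_i)`, which is nondecreasing in `t`; subtracting a
submartingale from a martingale leaves a supermartingale.
-/

section PartialSums

variable {Ω E : Type*} {mΩ : MeasurableSpace Ω} {ℱ : Filtration ℕ mΩ} {f : ℕ → Ω → E}

theorem stronglyAdapted_sum_range_succ [TopologicalSpace E] [AddCommMonoid E] [ContinuousAdd E]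
    (hf : ∀ t, StronglyMeasurable[ℱ (t + 1)] (f (t + 1))) :
    StronglyAdapted ℱ fun t ↦ ∑ i ∈ Finset.range t, f (i + 1) := fun _ ↦
  Finset.stronglyMeasurable_sum _ fun i hi ↦ (hf i).mono (ℱ.mono (Finset.mem_range.1 hi))

theorem submartingale_sum_range_succ_of_nonneg [NormedAddCommGroup E] [NormedSpace ℝ E]
    [CompleteSpace E] [PartialOrder E] [IsOrderedAddMonoid E] [IsOrderedModule ℝ E]
    [ClosedIciTopology E] {μ : Measure Ω} [IsFiniteMeasure μ]
    (hf : ∀ t, StronglyMeasurable[ℱ (t + 1)] (f (t + 1)))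
    (hf_int : ∀ t, Integrable (f (t + 1)) μ) (hf_nonneg : ∀ t, 0 ≤ᵐ[μ] f (t + 1)) :
    Submartingale (fun t ↦ ∑ i ∈ Finset.range t, f (i + 1)) ℱ μ := by
  refine submartingale_of_condExp_sub_nonneg_nat (stronglyAdapted_sum_range_succ hf)
    (fun _ ↦ integrable_finsetSum' _ fun i _ ↦ hf_int i) fun t ↦ ?_
  rw [Finset.sum_range_succ_sub_sum]
  exact condExp_nonneg (hf_nonneg t)

end PartialSums

theorem integrable_right_of_integrable_mul_of_one_le_norm {α 𝕜 : Type*} {mα : MeasurableSpace α}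
    {μ : Measure α} [NormedDivisionRing 𝕜] {f g : α → 𝕜} (hfg : Integrable (fun x ↦ f x * g x) μ)
    (hg : AEStronglyMeasurable g μ) (hf : ∀ᵐ x ∂μ, 1 ≤ ‖f x‖) : Integrable g μ := by
  refine hfg.mono hg ?_
  filter_upwards [hf] with x hx
  rw [norm_mul]
  exact le_mul_of_one_le_left (norm_nonneg _) hx

theorem condExp_one_add_mul_ae_eq_one {Ω : Type*} {m mΩ : MeasurableSpace Ω} {μ : Measure Ω}
    [IsFiniteMeasure μ] (hm : m ≤ mΩ) {l X : Ω → ℝ} (hl : StronglyMeasurable[m] l)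
    (hlX : Integrable (l * X) μ) (hX : Integrable X μ) (hX_cond : μ[X | m] =ᵐ[μ] 0) :
    μ[1 + l * X | m] =ᵐ[μ] 1 := by
  have h_one : μ[(1 : Ω → ℝ) | m] = 1 := condExp_const hm 1
  filter_upwards [condExp_add (integrable_const 1) hlX m,
    condExp_mul_of_stronglyMeasurable_left hl hlX hX, hX_cond] with ω h_add h_mul h_zero
  calc μ[1 + l * X | m] ω
      = μ[(1 : Ω → ℝ) | m] ω + μ[l * X | m] ω := h_add
    _ = 1 + l ω * 0 := by rw [h_one, h_mul, Pi.mul_apply, h_zero]; rfl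
    _ = 1 := by ring

/-- `W` is the wealth of a bettor who, before round `t + 1`, borrows `β (t + 1)` and then has all
available capital multiplied by the gross return `R (t + 1)`; staking a fraction `λ` of it on a coin
`X` is the case `R = 1 + λ X`. The values `β 0` and `R 0` are irrelevant. -/
def IsWealthProcess {Ω : Type*} (β R W : ℕ → Ω → ℝ) : Prop :=
  ∀ t, W (t + 1) = (W t + β (t + 1)) * R (t + 1)

namespace IsWealthProcess

variable {Ω : Type*} {mΩ : MeasurableSpace Ω} {μ : Measure Ω} {ℱ : Filtration ℕ mΩ}
  {β R W : ℕ → Ω → ℝ}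

theorem stronglyAdapted (hW : IsWealthProcess β R W) (hW0 : StronglyMeasurable[ℱ 0] (W 0))
    (hβ : ∀ t, StronglyMeasurable[ℱ (t + 1)] (β (t + 1)))
    (hR : ∀ t, StronglyMeasurable[ℱ (t + 1)] (R (t + 1))) : StronglyAdapted ℱ W := by
  intro t
  induction t with
  | zero => exact hW0
  | succ t ih =>
    rw [hW t]
    exact ((ih.mono (ℱ.mono t.le_succ)).add (hβ t)).mul (hR t)

theorem integrable (hW : IsWealthProcess β R W) (hW0 : Integrable (W 0) μ)
    (hβ : ∀ t, Integrable (β (t + 1)) μ) (hR : ∀ t, AEStronglyMeasurable (R (t + 1)) μ)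
    (hR_bdd : ∀ t, ∃ C, ∀ᵐ ω ∂μ, ‖R (t + 1) ω‖ ≤ C) (t : ℕ) : Integrable (W t) μ := by
  induction t with
  | zero => exact hW0
  | succ t ih =>
    obtain ⟨C, hC⟩ := hR_bdd t
    rw [hW t]
    exact (ih.add (hβ t)).mul_bdd (hR t) hC

theorem condExp_succ (hW : IsWealthProcess β R W) {t : ℕ}
    (hW_meas : StronglyMeasurable[ℱ t] (W t)) (hW_int : Integrable (W (t + 1)) μ)
    (hβ : StronglyMeasurable[ℱ t] (β (t + 1))) (hR_int : Integrable (R (t + 1)) μ)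
    (hR_cond : μ[R (t + 1) | ℱ t] =ᵐ[μ] 1) :
    μ[W (t + 1) | ℱ t] =ᵐ[μ] W t + β (t + 1) := by
  rw [hW t] at hW_int ⊢
  filter_upwards [condExp_mul_of_stronglyMeasurable_left (hW_meas.add hβ) hW_int hR_int, hR_cond]
    with ω h_mul h_one
  rw [h_mul, Pi.mul_apply, h_one, Pi.one_apply, mul_one]

theorem martingale_sub_sum_range_succ [IsFiniteMeasure μ] (hW : IsWealthProcess β R W)
    (hW0 : StronglyMeasurable[ℱ 0] (W 0)) (hW_int : ∀ t, Integrable (W t) μ)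
    (hβ : ∀ t, StronglyMeasurable[ℱ t] (β (t + 1))) (hβ_int : ∀ t, Integrable (β (t + 1)) μ)
    (hR : ∀ t, StronglyMeasurable[ℱ (t + 1)] (R (t + 1)))
    (hR_int : ∀ t, Integrable (R (t + 1)) μ) (hR_cond : ∀ t, μ[R (t + 1) | ℱ t] =ᵐ[μ] 1) :
    Martingale (fun t ↦ W t - ∑ i ∈ Finset.range t, β (i + 1)) ℱ μ := by
  have hβ' t : StronglyMeasurable[ℱ (t + 1)] (β (t + 1)) := (hβ t).mono (ℱ.mono t.le_succ)
  have hW_adapted : StronglyAdapted ℱ W := hW.stronglyAdapted hW0 hβ' hR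
  refine martingale_of_condExp_sub_eq_zero_nat
    (fun t ↦ (hW_adapted t).sub (stronglyAdapted_sum_range_succ hβ' t))
    (fun t ↦ (hW_int t).sub (integrable_finsetSum' _ fun i _ ↦ hβ_int i)) fun t ↦ ?_
  have h_increment : W (t + 1) - ∑ i ∈ Finset.range (t + 1), β (i + 1)
      - (W t - ∑ i ∈ Finset.range t, β (i + 1)) = W (t + 1) - (W t + β (t + 1)) := by
    rw [Finset.sum_range_succ]
    abel
  have h_capital : μ[W t + β (t + 1) | ℱ t] = W t + β (t + 1) :=
    condExp_of_stronglyMeasurable (ℱ.le t) ((hW_adapted t).add (hβ t))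
      ((hW_int t).add (hβ_int t))
  rw [h_increment]
  filter_upwards [condExp_sub (hW_int (t + 1)) ((hW_int t).add (hβ_int t)) (ℱ t),
    hW.condExp_succ (hW_adapted t) (hW_int (t + 1)) (hβ t) (hR_int t) (hR_cond t)]
    with ω h_sub h_succ
  rw [h_sub, Pi.sub_apply, h_succ, h_capital, sub_self, Pi.zero_apply]

end IsWealthProcess

theorem sub_net_wealth_supermartingale_general {Ω : Type*} {mΩ : MeasurableSpace Ω}
    {μ : Measure Ω} [IsFiniteMeasure μ] {ℱ : Filtration ℕ mΩ} {β R W ℓ : ℕ → Ω → ℝ}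
    (hW : IsWealthProcess β R W) (hW0 : StronglyMeasurable[ℱ 0] (W 0))
    (hW_int : ∀ t, Integrable (W t) μ) (hβ : ∀ t, StronglyMeasurable[ℱ t] (β (t + 1)))
    (hβ_int : ∀ t, Integrable (β (t + 1)) μ)
    (hR : ∀ t, StronglyMeasurable[ℱ (t + 1)] (R (t + 1)))
    (hR_int : ∀ t, Integrable (R (t + 1)) μ) (hR_cond : ∀ t, μ[R (t + 1) | ℱ t] =ᵐ[μ] 1)
    (hℓ : ∀ t, StronglyMeasurable[ℱ (t + 1)] (ℓ (t + 1)))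
    (hℓ_int : ∀ t, Integrable (ℓ (t + 1)) μ) (hβ_le : ∀ t, β (t + 1) ≤ᵐ[μ] ℓ (t + 1)) :
    Supermartingale (fun t ↦ W t - ∑ i ∈ Finset.range t, ℓ (i + 1)) ℱ μ := by
  have h_net : Martingale (fun t ↦ W t - ∑ i ∈ Finset.range t, β (i + 1)) ℱ μ :=
    hW.martingale_sub_sum_range_succ hW0 hW_int hβ hβ_int hR hR_int hR_cond
  have h_excess : Submartingale (fun t ↦ ∑ i ∈ Finset.range t, (ℓ - β) (i + 1)) ℱ μ :=
    submartingale_sum_range_succ_of_nonneg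
      (fun t ↦ (hℓ t).sub ((hβ t).mono (ℱ.mono t.le_succ)))
      (fun t ↦ (hℓ_int t).sub (hβ_int t))
      (fun t ↦ (hβ_le t).mono fun _ ↦ sub_nonneg.2)
  have h_split : (fun t ↦ W t - ∑ i ∈ Finset.range t, ℓ (i + 1)) =
      (fun t ↦ W t - ∑ i ∈ Finset.range t, β (i + 1)) -
        fun t ↦ ∑ i ∈ Finset.range t, (ℓ - β) (i + 1) := by
    funext t
    simp only [Pi.sub_apply, Finset.sum_sub_distrib]
    abel
  rw [h_split]
  exact h_net.supermartingale.sub_submartingale h_excess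

/-- With nonnegative borrowings and a predictable weight process `η ≥ 1`, the sub-net
wealth process `Ñ_t = W_t - Σ_{i≤t} η_i β_i` is a supermartingale. -/
theorem sub_net_wealth_supermartingale
    {Ω : Type*} {mΩ : MeasurableSpace Ω} {μ : Measure Ω} [IsProbabilityMeasure μ]
    (ℱ : Filtration ℕ mΩ)
    (X lam β η W Ntilde : ℕ → Ω → ℝ)
    (hX_val : ∀ t ω, X (t + 1) ω = 1 ∨ X (t + 1) ω = -1)
    (hX_meas : ∀ t, StronglyMeasurable[ℱ (t + 1)] (X (t + 1)))
    (hX_cond : ∀ t, μ[X (t + 1) | ℱ t] =ᵐ[μ] 0)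
    (hlam_pred : ∀ t, StronglyMeasurable[ℱ t] (lam (t + 1)))
    (hlam_bdd : ∀ t ω, lam (t + 1) ω ∈ Set.Icc (-1 : ℝ) 1)
    (hβ_pred : ∀ t, StronglyMeasurable[ℱ t] (β (t + 1)))
    (hβ_nonneg : ∀ t ω, 0 ≤ β (t + 1) ω)
    (hη_pred : ∀ t, StronglyMeasurable[ℱ t] (η (t + 1)))
    (hη_ge_one : ∀ t ω, 1 ≤ η (t + 1) ω)
    (hηβ_int : ∀ t, Integrable (fun ω => η (t + 1) ω * β (t + 1) ω) μ)
    (hW0 : ∀ ω, W 0 ω = 1)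
    (hW : ∀ t ω, W (t + 1) ω = (W t ω + β (t + 1) ω) * (1 + lam (t + 1) ω * X (t + 1) ω))
    (hNtilde : ∀ t ω, Ntilde t ω = W t ω - ∑ i ∈ Finset.range t, η (i + 1) ω * β (i + 1) ω) :
    Supermartingale Ntilde ℱ μ := by
  have hX_bdd t ω : ‖X (t + 1) ω‖ ≤ 1 := by rcases hX_val t ω with hX | hX <;> simp [hX]
  have hX_int t : Integrable (X (t + 1)) μ :=
    .of_bound ((hX_meas t).mono (ℱ.le _)).aestronglyMeasurable 1 (.of_forall (hX_bdd t))
  have hlX_int t : Integrable ((lam * X) (t + 1)) μ :=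
    (hX_int t).bdd_mul ((hlam_pred t).mono (ℱ.le _)).aestronglyMeasurable
      (.of_forall fun ω ↦ abs_le.2 (hlam_bdd t ω))
  have hβ_int t : Integrable (β (t + 1)) μ :=
    integrable_right_of_integrable_mul_of_one_le_norm (hηβ_int t)
      ((hβ_pred t).mono (ℱ.le _)).aestronglyMeasurable
      (.of_forall fun ω ↦ (hη_ge_one t ω).trans (le_abs_self _))
  have hR t : StronglyMeasurable[ℱ (t + 1)] ((1 + lam * X) (t + 1)) :=
    stronglyMeasurable_one.add (((hlam_pred t).mono (ℱ.mono t.le_succ)).mul (hX_meas t))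
  have hR_int t : Integrable ((1 + lam * X) (t + 1)) μ := (integrable_const 1).add (hlX_int t)
  have hR_cond t : μ[(1 + lam * X) (t + 1) | ℱ t] =ᵐ[μ] 1 :=
    condExp_one_add_mul_ae_eq_one (ℱ.le t) (hlam_pred t) (hlX_int t) (hX_int t) (hX_cond t)
  have hW0_eq : W 0 = fun _ ↦ 1 := funext hW0
  have h_wealth : IsWealthProcess β (1 + lam * X) W := fun t ↦ funext (hW t)
  have hW_int := h_wealth.integrable (hW0_eq ▸ integrable_const 1) hβ_int (fun t ↦ (hR_int t).1)
    fun t ↦ ⟨_, .of_forall fun ω ↦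
      norm_add_le_of_le norm_one.le (norm_mul_le_of_le (abs_le.2 (hlam_bdd t ω)) (hX_bdd t ω))⟩
  obtain rfl : Ntilde = fun t ↦ W t - ∑ i ∈ Finset.range t, (η * β) (i + 1) := by
    ext t ω
    simp [hNtilde]
  exact sub_net_wealth_supermartingale_general h_wealth
    (hW0_eq ▸ stronglyMeasurable_const) hW_int hβ_pred hβ_int hR hR_int hR_cond
    (fun t ↦ ((hη_pred t).mul (hβ_pred t)).mono (ℱ.mono t.le_succ)) hηβ_int
    fun t ↦ .of_forall fun ω ↦ le_mul_of_one_le_left (hβ_nonneg t ω) (hη_ge_one t ω)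
end

section
/- The functional 𝓔 is leverage invariant: for every Q-integrable random variable Y and every real β ≠ −1, the set {a·E_Q[Y] + b : a, b ∈ ℝ such that P(aY + b ≥ x) ≤ 1/x for all x > 0} coincides with the corresponding set for the leveraged outcome (1 + β)Y − β, namely {a·E_Q[(1+β)Y − β] + b : a, b ∈ ℝ such that P(a((1+β)Y − β) + b ≥ x) ≤ 1/x for all x > 0}; consequently 𝓔((1 + β)Y − β) = 𝓔(Y). -/
open MeasureTheory

/-!
The affine functions of `c * Y + d` are affine functions of `Y`, and since expectations commute with
affine maps, corresponding standardizations have the same expected value. For `c ≠ 0` the affine map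
is invertible, so the resulting inclusion holds in both directions.
-/

section

variable {Ω : Type*} {mΩ : MeasurableSpace Ω}

/-- The class of tail evidences against the null `P`: functions whose upper tails obey the bound
that Markov's inequality gives for a nonnegative variable of mean at most one. Elements are not
required to be measurable, so `P` is applied as an outer measure. -/
def tailEvidence (P : Measure Ω) : Set (Ω → ℝ) :=
  {X | ∀ x : ℝ, 0 < x → P {ω | x ≤ X ω} ≤ ENNReal.ofReal (1 / x)}

/-- The expected values under `Q` of the affine standardizations `a * Y + b` of `Y` that lie in a
class `S` of admissible evidences. The evidence functional of `Y` is the supremum of this set for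
`S = tailEvidence P`. The value is encoded as `a * E_Q[Y] + b`, with `E_Q[Y] = 0` when `Y` is not
integrable. -/
def standardizedExpectations (Q : Measure Ω) (S : Set (Ω → ℝ)) (Y : Ω → ℝ) : Set ℝ :=
  {r | ∃ a b : ℝ, r = a * (∫ ω, Y ω ∂Q) + b ∧ (fun ω ↦ a * Y ω + b) ∈ S}

variable {Q : Measure Ω} [IsProbabilityMeasure Q] {Y : Ω → ℝ}

lemma integral_const_mul_add_const (hY : Integrable Y Q) (c d : ℝ) :
    ∫ ω, (c * Y ω + d) ∂Q = c * (∫ ω, Y ω ∂Q) + d := by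
  rw [integral_add (hY.const_mul c) (integrable_const d), integral_const_mul, integral_const,
    probReal_univ, one_smul]

lemma standardizedExpectations_const_mul_add_const_subset (S : Set (Ω → ℝ))
    (hY : Integrable Y Q) (c d : ℝ) :
    standardizedExpectations Q S (fun ω ↦ c * Y ω + d) ⊆ standardizedExpectations Q S Y := by
  rintro _ ⟨a, b, rfl, hS⟩
  have affine_comp (y : ℝ) : a * (c * y + d) + b = a * c * y + (a * d + b) := by ring
  refine ⟨a * c, a * d + b, ?_, ?_⟩
  · rw [integral_const_mul_add_const hY, affine_comp]
  · simpa only [affine_comp] using hS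

theorem evidence_functional_leverage_invariant_general (S : Set (Ω → ℝ))
    (hY : Integrable Y Q) {c : ℝ} (hc : c ≠ 0) (d : ℝ) :
    standardizedExpectations Q S (fun ω ↦ c * Y ω + d) = standardizedExpectations Q S Y := by
  refine (standardizedExpectations_const_mul_add_const_subset S hY c d).antisymm ?_
  have affine_inv (y : ℝ) : c⁻¹ * (c * y + d) + -(c⁻¹ * d) = y := by
    rw [mul_add, inv_mul_cancel_left₀ hc, add_neg_cancel_right]
  have hcY : Integrable (fun ω ↦ c * Y ω + d) Q := (hY.const_mul c).add (integrable_const d)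
  simpa only [affine_inv] using
    standardizedExpectations_const_mul_add_const_subset S hcY c⁻¹ (-(c⁻¹ * d))

end

/-- **Leverage invariance of the evidence functional 𝓔.** The set of values `a·E_Q[Y] + b`
over affine standardizations `(a, b)` of `Y` into a tail evidence against `P` coincides
with the corresponding set for the leveraged outcome `(1 + β)Y - β` (β ≠ -1); consequently
the suprema `𝓔((1 + β)Y - β)` and `𝓔(Y)` agree. -/
theorem evidence_functional_leverage_invariant
    {Ω : Type*} {mΩ : MeasurableSpace Ω} (P Q : Measure Ω)
    [IsProbabilityMeasure P] [IsProbabilityMeasure Q]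
    (Y : Ω → ℝ) (hY : Integrable Y Q) (β : ℝ) (hβ : β ≠ -1) :
    ({r : ℝ | ∃ a b : ℝ, r = a * (∫ ω, ((1 + β) * Y ω - β) ∂Q) + b ∧
        ∀ x : ℝ, 0 < x →
          P {ω | x ≤ a * ((1 + β) * Y ω - β) + b} ≤ ENNReal.ofReal (1 / x)}
      = {r : ℝ | ∃ a b : ℝ, r = a * (∫ ω, Y ω ∂Q) + b ∧
          ∀ x : ℝ, 0 < x → P {ω | x ≤ a * Y ω + b} ≤ ENNReal.ofReal (1 / x)}) ∧
    sSup {r : ℝ | ∃ a b : ℝ, r = a * (∫ ω, ((1 + β) * Y ω - β) ∂Q) + b ∧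
        ∀ x : ℝ, 0 < x →
          P {ω | x ≤ a * ((1 + β) * Y ω - β) + b} ≤ ENNReal.ofReal (1 / x)}
      = sSup {r : ℝ | ∃ a b : ℝ, r = a * (∫ ω, Y ω ∂Q) + b ∧
          ∀ x : ℝ, 0 < x → P {ω | x ≤ a * Y ω + b} ≤ ENNReal.ofReal (1 / x)} := by
  have h := evidence_functional_leverage_invariant_general (tailEvidence P) hY
    (mt eq_neg_of_add_eq_zero_right hβ : 1 + β ≠ 0) (-β)
  simp only [← sub_eq_add_neg] at h
  exact ⟨h, congrArg sSup h⟩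
end

section
/- In the mispriced betting game with deterministic bonus rates b_t ≥ 0 and compound interest liabilities L_0 = 0, L_t = (1 + b_t)(L_{t−1} + β_t), set N_t = W_t − L_t and let Π_t = (1 + b_1)···(1 + b_t) (Π_0 = 1). Then the adjusted wealth W'_t = W_t/Π_t decomposes as W'_t = N'_t + L'_t, where the adjusted net wealth N'_t = N_t/Π_t is a martingale with respect to {ℱ_t} under P and the adjusted liabilities L'_t = L_t/Π_t is a predictable process with L'_0 = 0; i.e., this is the Doob decomposition of {W'_t}. -/
/-!
Dividing by `Π_t` cancels the bonus `1 + b_{t+1}` in both recursions. What remains is a fair game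
with deposits `β_{t+1} / Π_t`: the adjusted liabilities are the running sum of the past deposits,
hence predictable, and the adjusted net wealth moves only by `(W'_t + β_{t+1} / Π_t) R_{t+1}`, the
stake known at time `t` times the return `R_{t+1} = λ_{t+1} X_{t+1}`, which has conditional mean
zero.
-/

open MeasureTheory

section

variable {Ω : Type*} {mΩ : MeasurableSpace Ω} {μ : Measure Ω} {ℱ : Filtration ℕ mΩ}

/-- Martingale difference sequences with bounded terms, the possible returns on a unit stake in a
fair game. The term `R (t + 1)` is the return of the round between times `t` and `t + 1`, the bound
may depend on the round, and `R 0` is unconstrained. -/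
structure IsBoundedMartingaleDifference (ℱ : Filtration ℕ mΩ) (μ : Measure Ω) (R : ℕ → Ω → ℝ) :
    Prop where
  stronglyMeasurable (t : ℕ) : StronglyMeasurable[ℱ (t + 1)] (R (t + 1))
  bounded (t : ℕ) : ∃ C, ∀ᵐ ω ∂μ, |R (t + 1) ω| ≤ C
  condExp_eq_zero (t : ℕ) : μ[R (t + 1) | ℱ t] =ᵐ[μ] 0

namespace IsBoundedMartingaleDifference

variable {R g : ℕ → Ω → ℝ} {f : Ω → ℝ}

theorem aestronglyMeasurable (hR : IsBoundedMartingaleDifference ℱ μ R) (t : ℕ) :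
    AEStronglyMeasurable (R (t + 1)) μ :=
  ((hR.stronglyMeasurable t).mono (ℱ.le _)).aestronglyMeasurable

theorem integrable_mul (hR : IsBoundedMartingaleDifference ℱ μ R) {t : ℕ} (hf : Integrable f μ) :
    Integrable (f * R (t + 1)) μ :=
  let ⟨_, hC⟩ := hR.bounded t
  hf.mul_bdd (hR.aestronglyMeasurable t) hC

variable [IsFiniteMeasure μ]

theorem integrable (hR : IsBoundedMartingaleDifference ℱ μ R) (t : ℕ) :
    Integrable (R (t + 1)) μ :=
  let ⟨C, hC⟩ := hR.bounded t
  .of_bound (hR.aestronglyMeasurable t) C hC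

theorem condExp_mul_eq_zero (hR : IsBoundedMartingaleDifference ℱ μ R) {t : ℕ}
    (hf_meas : StronglyMeasurable[ℱ t] f) (hf_int : Integrable f μ) :
    μ[f * R (t + 1) | ℱ t] =ᵐ[μ] 0 := by
  filter_upwards [condExp_mul_of_stronglyMeasurable_left hf_meas (hR.integrable_mul hf_int)
    (hR.integrable t), hR.condExp_eq_zero t] with ω h_pull h_zero
  simp [h_pull, h_zero]

theorem predictable_mul (hR : IsBoundedMartingaleDifference ℱ μ R)
    (hg_meas : ∀ t, StronglyMeasurable[ℱ t] (g (t + 1)))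
    (hg_bdd : ∀ t, ∃ C, ∀ᵐ ω ∂μ, |g (t + 1) ω| ≤ C) :
    IsBoundedMartingaleDifference ℱ μ (g * R) where
  stronglyMeasurable t := ((hg_meas t).mono (ℱ.mono t.le_succ)).mul (hR.stronglyMeasurable t)
  bounded t := by
    obtain ⟨C, hC⟩ := hg_bdd t
    obtain ⟨D, hD⟩ := hR.bounded t
    refine ⟨C * D, ?_⟩
    filter_upwards [hC, hD] with ω hCω hDω
    calc |g (t + 1) ω * R (t + 1) ω| = |g (t + 1) ω| * |R (t + 1) ω| := abs_mul _ _
      _ ≤ C * D := mul_le_mul hCω hDω (abs_nonneg _) ((abs_nonneg _).trans hCω)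
  condExp_eq_zero t := by
    obtain ⟨C, hC⟩ := hg_bdd t
    have hg_int : Integrable (g (t + 1)) μ :=
      .of_bound ((hg_meas t).mono (ℱ.le t)).aestronglyMeasurable C hC
    exact hR.condExp_mul_eq_zero (hg_meas t) hg_int

end IsBoundedMartingaleDifference

section FairGame

variable {V d R : ℕ → Ω → ℝ}

theorem stronglyAdapted_wealth_s17 (hR_meas : ∀ t, StronglyMeasurable[ℱ (t + 1)] (R (t + 1)))
    (hd_meas : StronglyAdapted ℱ d) (hV0 : StronglyMeasurable[ℱ 0] (V 0))
    (hV : ∀ t, V (t + 1) = (V t + d t) * (1 + R (t + 1))) :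
    StronglyAdapted ℱ V := by
  intro t
  induction t with
  | zero => exact hV0
  | succ t ih =>
    rw [hV]
    exact ((ih.add (hd_meas t)).mono (ℱ.mono t.le_succ)).mul
      (stronglyMeasurable_one.add (hR_meas t))

theorem integrable_wealth_s17 (hR : IsBoundedMartingaleDifference ℱ μ R)
    (hd_int : ∀ t, Integrable (d t) μ) (hV0 : Integrable (V 0) μ)
    (hV : ∀ t, V (t + 1) = (V t + d t) * (1 + R (t + 1))) (t : ℕ) :
    Integrable (V t) μ := by
  induction t with
  | zero => exact hV0
  | succ t ih =>
    rw [hV, mul_one_add]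
    have h_stake : Integrable (V t + d t) μ := ih.add (hd_int t)
    exact h_stake.add (hR.integrable_mul h_stake)

theorem martingale_wealth_sub_sum_deposits [IsFiniteMeasure μ]
    (hR : IsBoundedMartingaleDifference ℱ μ R)
    (hd_meas : StronglyAdapted ℱ d) (hd_int : ∀ t, Integrable (d t) μ)
    (hV0_meas : StronglyMeasurable[ℱ 0] (V 0)) (hV0_int : Integrable (V 0) μ)
    (hV : ∀ t, V (t + 1) = (V t + d t) * (1 + R (t + 1))) :
    Martingale (fun t => V t - ∑ i ∈ Finset.range t, d i) ℱ μ := by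
  have hV_meas : StronglyAdapted ℱ V :=
    stronglyAdapted_wealth_s17 hR.stronglyMeasurable hd_meas hV0_meas hV
  have hV_int : ∀ t, Integrable (V t) μ := integrable_wealth_s17 hR hd_int hV0_int hV
  refine martingale_of_condExp_sub_eq_zero_nat (fun t => ?_) (fun t => ?_) (fun t => ?_)
  · exact (hV_meas t).sub (Finset.stronglyMeasurable_sum _ fun i hi =>
      (hd_meas i).mono (ℱ.mono (Finset.mem_range_le hi)))
  · exact (hV_int t).sub (integrable_finsetSum' _ fun i _ => hd_int i)
  · have h_increment : V (t + 1) - ∑ i ∈ Finset.range (t + 1), d i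
        - (V t - ∑ i ∈ Finset.range t, d i) = (V t + d t) * R (t + 1) := by
      rw [hV, Finset.sum_range_succ]
      ring
    rw [h_increment]
    exact hR.condExp_mul_eq_zero ((hV_meas t).add (hd_meas t)) ((hV_int t).add (hd_int t))

end FairGame

/-- The compounding factor `Π_t = (1 + b_1)⋯(1 + b_t)`, by which wealth and liabilities are
adjusted. The rates `b` may be random; the value `b 0` does not enter. -/
def accumulationFactor (b : ℕ → Ω → ℝ) (t : ℕ) (ω : Ω) : ℝ :=
  ∏ i ∈ Finset.range t, (1 + b (i + 1) ω)

section Discounting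

variable {b : ℕ → Ω → ℝ}

theorem stronglyAdapted_accumulationFactor
    (hb_meas : ∀ t, StronglyMeasurable[ℱ (t + 1)] (b (t + 1))) :
    StronglyAdapted ℱ (accumulationFactor b) := fun _ =>
  Finset.stronglyMeasurable_fun_prod _ fun i hi =>
    stronglyMeasurable_const.add ((hb_meas i).mono (ℱ.mono (Finset.mem_range.mp hi)))

theorem mul_div_accumulationFactor_succ {t : ℕ} {ω : Ω} (hb : 1 + b (t + 1) ω ≠ 0) (c : ℝ) :
    c * (1 + b (t + 1) ω) / accumulationFactor b (t + 1) ω = c / accumulationFactor b t ω := by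
  rw [accumulationFactor, Finset.prod_range_succ, mul_div_mul_right _ _ hb, accumulationFactor]

variable {W L β R : ℕ → Ω → ℝ}

theorem discounted_wealth_succ (hb : ∀ t ω, 1 + b (t + 1) ω ≠ 0)
    (hW : ∀ t, W (t + 1) = (W t + β (t + 1)) * (1 + b (t + 1)) * (1 + R (t + 1))) (t : ℕ) :
    W (t + 1) / accumulationFactor b (t + 1) =
      (W t / accumulationFactor b t + β (t + 1) / accumulationFactor b t) * (1 + R (t + 1)) := by
  ext ω
  simp only [hW, Pi.add_apply, Pi.mul_apply, Pi.div_apply, Pi.one_apply]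
  rw [mul_div_right_comm, mul_div_accumulationFactor_succ (hb t ω), add_div]

theorem discounted_liabilities_eq_sum (hb : ∀ t ω, 1 + b (t + 1) ω ≠ 0) (hL0 : L 0 = 0)
    (hL : ∀ t, L (t + 1) = (1 + b (t + 1)) * (L t + β (t + 1))) (t : ℕ) :
    L t / accumulationFactor b t =
      ∑ i ∈ Finset.range t, β (i + 1) / accumulationFactor b i := by
  induction t with
  | zero =>
    ext ω
    simp [hL0]
  | succ t ih =>
    rw [Finset.sum_range_succ, ← ih]
    ext ω
    simp only [hL, Pi.add_apply, Pi.mul_apply, Pi.div_apply, Pi.one_apply]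
    rw [mul_comm, mul_div_accumulationFactor_succ (hb t ω), add_div]

end Discounting

theorem mispriced_adjusted_wealth_doob_decomposition_general [IsFiniteMeasure μ]
    {R β W L b : ℕ → Ω → ℝ} (hR : IsBoundedMartingaleDifference ℱ μ R)
    (hb_meas : ∀ t, StronglyMeasurable[ℱ (t + 1)] (b (t + 1)))
    (hb : ∀ t ω, 1 + b (t + 1) ω ≠ 0)
    (hβ_meas : ∀ t, StronglyMeasurable[ℱ t] (β (t + 1)))
    (hβ_int : ∀ t, Integrable (β (t + 1) / accumulationFactor b t) μ)
    (hW0_meas : StronglyMeasurable[ℱ 0] (W 0)) (hW0_int : Integrable (W 0) μ)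
    (hW : ∀ t, W (t + 1) = (W t + β (t + 1)) * (1 + b (t + 1)) * (1 + R (t + 1)))
    (hL0 : L 0 = 0) (hL : ∀ t, L (t + 1) = (1 + b (t + 1)) * (L t + β (t + 1))) :
    Martingale (fun t => (W t - L t) / accumulationFactor b t) ℱ μ ∧
      (∀ ω, (L 0 / accumulationFactor b 0) ω = 0) ∧
      (∀ t, StronglyMeasurable[ℱ t] (L (t + 1) / accumulationFactor b (t + 1))) ∧
      (∀ t ω, (W t / accumulationFactor b t) ω =
        ((W t - L t) / accumulationFactor b t) ω + (L t / accumulationFactor b t) ω) := by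
  have h_deposit_meas : StronglyAdapted ℱ fun t => β (t + 1) / accumulationFactor b t := fun t =>
    ((hβ_meas t).measurable.div
      (stronglyAdapted_accumulationFactor hb_meas t).measurable).stronglyMeasurable
  have h_initial : W 0 / accumulationFactor b 0 = W 0 := by
    ext ω
    simp [accumulationFactor]
  have h_liabilities := discounted_liabilities_eq_sum hb hL0 hL
  have h_net (t : ℕ) : (W t - L t) / accumulationFactor b t =
      W t / accumulationFactor b t - ∑ i ∈ Finset.range t, β (i + 1) / accumulationFactor b i := by
    rw [← h_liabilities]
    ext ω
    exact sub_div _ _ _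
  refine ⟨?_, fun ω => by simp [hL0], fun t => ?_, fun t ω => ?_⟩
  · simp only [h_net]
    exact martingale_wealth_sub_sum_deposits (V := fun t => W t / accumulationFactor b t)
      hR h_deposit_meas hβ_int (by simpa only [h_initial]) (by simpa only [h_initial])
      (discounted_wealth_succ hb hW)
  · rw [h_liabilities]
    exact Finset.stronglyMeasurable_sum _ fun i hi =>
      (h_deposit_meas i).mono (ℱ.mono (Finset.mem_range_succ_iff.mp hi))
  · simp [sub_div]

end

/-- In the mispriced betting game with compound interest liabilities
`L_t = (1 + b_t)(L_{t-1} + β_t)` and `Π_t = (1 + b_1)⋯(1 + b_t)`, the adjusted wealth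
`W'_t = W_t / Π_t` decomposes as `W'_t = N'_t + L'_t`, where the adjusted net wealth
`N'_t = (W_t - L_t)/Π_t` is a martingale and the adjusted liabilities `L'_t = L_t / Π_t`
is predictable with `L'_0 = 0`: the Doob decomposition of `W'`. -/
theorem mispriced_adjusted_wealth_doob_decomposition
    {Ω : Type*} {mΩ : MeasurableSpace Ω} {μ : Measure Ω} [IsProbabilityMeasure μ]
    (ℱ : Filtration ℕ mΩ)
    (X lam β W : ℕ → Ω → ℝ) (b : ℕ → ℝ)
    (hX_val : ∀ t ω, X (t + 1) ω = 1 ∨ X (t + 1) ω = -1)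
    (hX_meas : ∀ t, StronglyMeasurable[ℱ (t + 1)] (X (t + 1)))
    (hX_cond : ∀ t, μ[X (t + 1) | ℱ t] =ᵐ[μ] 0)
    (hlam_pred : ∀ t, StronglyMeasurable[ℱ t] (lam (t + 1)))
    (hlam_bdd : ∀ t ω, lam (t + 1) ω ∈ Set.Icc (-1 : ℝ) 1)
    (hβ_pred : ∀ t, StronglyMeasurable[ℱ t] (β (t + 1)))
    (hβ_int : ∀ t, Integrable (β (t + 1)) μ)
    (hβ_lb : ∀ t ω, -(W t ω) ≤ β (t + 1) ω)
    (hb_nonneg : ∀ t, 0 ≤ b (t + 1))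
    (hW0 : ∀ ω, W 0 ω = 1)
    (hW : ∀ t ω, W (t + 1) ω
      = (W t ω + β (t + 1) ω) * (1 + b (t + 1)) * (1 + lam (t + 1) ω * X (t + 1) ω))
    (L N' L' W' : ℕ → Ω → ℝ)
    (hL0 : ∀ ω, L 0 ω = 0)
    (hLrec : ∀ t ω, L (t + 1) ω = (1 + b (t + 1)) * (L t ω + β (t + 1) ω))
    (hN' : ∀ t ω, N' t ω = (W t ω - L t ω) / ∏ i ∈ Finset.range t, (1 + b (i + 1)))
    (hL' : ∀ t ω, L' t ω = L t ω / ∏ i ∈ Finset.range t, (1 + b (i + 1)))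
    (hW' : ∀ t ω, W' t ω = W t ω / ∏ i ∈ Finset.range t, (1 + b (i + 1))) :
    Martingale N' ℱ μ ∧ (∀ ω, L' 0 ω = 0) ∧
      (∀ t, StronglyMeasurable[ℱ t] (L' (t + 1))) ∧
      (∀ t ω, W' t ω = N' t ω + L' t ω) := by
  obtain rfl : N' = _ := funext₂ hN'
  obtain rfl : L' = _ := funext₂ hL'
  obtain rfl : W' = _ := funext₂ hW'
  have hX : IsBoundedMartingaleDifference ℱ μ X :=
    ⟨hX_meas, fun t => ⟨1, .of_forall fun ω => by rcases hX_val t ω with h | h <;> simp [h]⟩,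
      hX_cond⟩
  have hR : IsBoundedMartingaleDifference ℱ μ (lam * X) :=
    hX.predictable_mul hlam_pred fun t => ⟨1, .of_forall fun ω => abs_le.mpr (hlam_bdd t ω)⟩
  have hW0_eq : W 0 = fun _ => 1 := funext hW0
  exact mispriced_adjusted_wealth_doob_decomposition_general (b := fun t _ => b t) hR
    (fun _ => stronglyMeasurable_const)
    (fun t _ => (add_pos_of_pos_of_nonneg one_pos (hb_nonneg t)).ne')
    hβ_pred (fun t => (hβ_int t).div_const _)
    (hW0_eq ▸ stronglyMeasurable_const) (hW0_eq ▸ integrable_const 1)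
    (fun t => funext (hW t)) (funext hL0) (fun t => funext (hLrec t))
end
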